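/- Suppose 0 ≤ k ≤ p − 2, e_k ≥ h_k, and h_{k+1} = h_k (equivalently, c(k + 1 + h_k) = h_k). Then e_{k+1} < h_{k+1} if and only if N_k < 2·h_k² − h_k + c(k+1) (equivalently, e_k² < h_k² − h_k + c(k+1)). (Proposition 4.9(i).) -/

import Mathlib

/-- The shifted h-index of order `k`: the largest `m` with `1 ≤ m ≤ p - k` and
`c (k + m) ≥ m` (the Hirsch h-index of the tail sequence `c (k+1), …, c p`).
Taken as the `sup` of the (finite) set of such `m`, which equals its maximum
when the set is nonempty and is `0` otherwise. -/
def hIdx (p : ℕ) (c : ℕ → ℕ) (k : ℕ) : ℕ :=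
  ((Finset.Icc 1 (p - k)).filter (fun m => m ≤ c (k + m))).sup id

/-- The shifted core sum `N_k = Σ_{j=k+1}^{k+h_k} c j`. -/
def coreSum (p : ℕ) (c : ℕ → ℕ) (k : ℕ) : ℕ :=
  ∑ j ∈ Finset.Icc (k + 1) (k + hIdx p c k), c j

/-- The shifted e-index `e_k = √(N_k − h_k²)`. -/
noncomputable def eIdx (p : ℕ) (c : ℕ → ℕ) (k : ℕ) : ℝ :=
  Real.sqrt ((coreSum p c k : ℝ) - (hIdx p c k : ℝ) ^ 2)

/-!
If `h_{k+1} = h_k = h`, passing from `k` to `k + 1` slides the core window of length `h` one step to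
the right: it loses `c (k+1)` and gains `c (k+1+h)`. Since `h` is admissible for `k + 1` while
`h + 1` is not admissible for `k`, the gained term equals `h`. So `N_{k+1} = N_k - c (k+1) + h`, and
`e_{k+1} < h` means `N_{k+1} < 2 h²`.
-/

theorem sum_Icc_succ_add_eq_sum_Ico_add {M : Type*} [AddCommMonoid M] (f : ℕ → M) (a n : ℕ) :
    ∑ j ∈ Finset.Icc (a + 1) (a + n), f j + f a = ∑ j ∈ Finset.Ico a (a + n), f j + f (a + n) := by
  have ha : a ≤ a + n := Nat.le_add_right a n
  rw [Finset.sum_Ico_add_eq_sum_Icc ha, ← Finset.sum_Ioc_add_eq_sum_Icc ha,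
    ← Finset.Icc_add_one_left_eq_Ioc]

section ShiftedIndices

variable {p k m : ℕ} {c : ℕ → ℕ}

theorem le_hIdx (hm : 1 ≤ m) (hmp : m ≤ p - k) (hmc : m ≤ c (k + m)) : m ≤ hIdx p c k :=
  Finset.le_sup (f := id) (Finset.mem_filter.2 ⟨Finset.mem_Icc.2 ⟨hm, hmp⟩, hmc⟩)

theorem hIdx_le_sub : hIdx p c k ≤ p - k :=
  Finset.sup_le fun _ hm => (Finset.mem_Icc.1 (Finset.mem_filter.1 hm).1).2

theorem hIdx_le_apply : hIdx p c k ≤ c (k + hIdx p c k) := by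
  rcases Finset.eq_empty_or_nonempty
    ((Finset.Icc 1 (p - k)).filter (fun m => m ≤ c (k + m))) with hempty | hne
  · simp [hIdx, hempty]
  · obtain ⟨m, hm, hsup⟩ := Finset.exists_mem_eq_sup _ hne id
    have hIdx_eq : hIdx p c k = m := hsup
    rw [hIdx_eq]
    exact (Finset.mem_filter.1 hm).2

theorem apply_lt_of_hIdx_lt (hm : hIdx p c k < m) (hmp : m ≤ p - k) : c (k + m) < m := by
  by_contra! hmc
  exact hm.not_ge (le_hIdx (Nat.one_le_of_lt hm) hmp hmc)

theorem apply_eq_hIdx_of_hIdx_succ_eq (hk : k < p) (hh : hIdx p c (k + 1) = hIdx p c k) :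
    c (k + 1 + hIdx p c k) = hIdx p c k := by
  apply le_antisymm
  · have hle : hIdx p c k ≤ p - (k + 1) := hh ▸ hIdx_le_sub
    have hlt : c (k + (hIdx p c k + 1)) < hIdx p c k + 1 :=
      apply_lt_of_hIdx_lt (Nat.lt_succ_self _) (by omega)
    rw [add_assoc, add_comm 1]
    exact Nat.le_of_lt_succ hlt
  · calc
      hIdx p c k = hIdx p c (k + 1) := hh.symm
      _ ≤ c (k + 1 + hIdx p c (k + 1)) := hIdx_le_apply
      _ = c (k + 1 + hIdx p c k) := by rw [hh]

theorem coreSum_succ_add_apply (hk : k < p) (hh : hIdx p c (k + 1) = hIdx p c k) :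
    coreSum p c (k + 1) + c (k + 1) = coreSum p c k + hIdx p c k := by
  have hwindow : Finset.Ico (k + 1) (k + 1 + hIdx p c k) =
      Finset.Icc (k + 1) (k + hIdx p c k) := by
    rw [add_right_comm, Finset.Ico_add_one_right_eq_Icc]
  have hslide := sum_Icc_succ_add_eq_sum_Ico_add c (k + 1) (hIdx p c k)
  rw [hwindow, apply_eq_hIdx_of_hIdx_succ_eq hk hh] at hslide
  simpa only [coreSum, hh] using hslide

-- When `N_k < h_k²`, `eIdx` takes the junk value `√(negative) = 0` and both sides are true.
theorem eIdx_lt_hIdx_iff (hpos : 0 < hIdx p c k) :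
    eIdx p c k < hIdx p c k ↔ coreSum p c k < 2 * hIdx p c k ^ 2 := by
  rw [eIdx, Real.sqrt_lt' (Nat.cast_pos.2 hpos), sub_lt_iff_lt_add, ← two_mul]
  norm_cast

theorem stmt_10_general (hpos : 0 < hIdx p c (k + 1)) (hh : hIdx p c (k + 1) = hIdx p c k) :
    eIdx p c (k + 1) < (hIdx p c (k + 1) : ℝ) ↔
      (coreSum p c k : ℤ) < 2 * (hIdx p c k : ℤ) ^ 2 - hIdx p c k + c (k + 1) := by
  have hk : k < p := by
    have hle : hIdx p c (k + 1) ≤ p - (k + 1) := hIdx_le_sub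
    omega
  have hslide : (coreSum p c (k + 1) : ℤ) + c (k + 1) = coreSum p c k + hIdx p c k :=
    mod_cast coreSum_succ_add_apply hk hh
  rw [eIdx_lt_hIdx_iff hpos, hh]
  zify
  constructor <;> intro hlt <;> linarith only [hslide, hlt]

end ShiftedIndices

theorem stmt_10 (p : ℕ) (hp : 1 ≤ p) (c : ℕ → ℕ)
    (hmono : ∀ i j, 1 ≤ i → i ≤ j → j ≤ p → c j ≤ c i)
    (hpos : ∀ j, 1 ≤ j → j ≤ p → 1 ≤ c j)
    (hzero : ∀ j, p < j → c j = 0)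
    (k : ℕ) (hk : k + 2 ≤ p)
    (he : (hIdx p c k : ℝ) ≤ eIdx p c k)
    (hh : hIdx p c (k + 1) = hIdx p c k) :
    eIdx p c (k + 1) < (hIdx p c (k + 1) : ℝ) ↔
      (coreSum p c k : ℤ) < 2 * (hIdx p c k : ℤ) ^ 2 - hIdx p c k + c (k + 1) := by
  have hpos_succ : 1 ≤ hIdx p c (k + 1) :=
    le_hIdx le_rfl (by omega) (hpos (k + 1 + 1) (by omega) hk)
  exact stmt_10_general hpos_succ hh
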